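/- arXiv:math/0503568 — 2 statements merged into one kernel-verified Lean document; each statement's English description precedes it below -/
import Mathlib

section
/- The operator T = S + Ŝ satisfies the recurrent identity T⁵ = −2(b²+m²)·T³ − (b²−m²)²·T, where b² = |X|²|Y|² − ⟨X,Y⟩² and m² = ⟨X,J₁Y⟩² + ⟨X,J₂Y⟩² + ⟨X,J₃Y⟩². -/
open scoped RealInnerProductSpace

/-- `T = S + Ŝ` satisfies `T⁵ = −2(b²+m²) T³ − (b²−m²)² T`. -/
theorem stmt_15 {V : Type*} [NormedAddCommGroup V] [InnerProductSpace ℝ V]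
    (X Y : V) (J₁ J₂ J₃ S S₁ S₂ S₃ : V →ₗ[ℝ] V)
    (h1 : ∀ Z, J₁ (J₁ Z) = -Z) (h2 : ∀ Z, J₂ (J₂ Z) = -Z) (h3 : ∀ Z, J₃ (J₃ Z) = -Z)
    (h12 : J₁ ∘ₗ J₂ = J₃) (h23 : J₂ ∘ₗ J₃ = J₁) (h31 : J₃ ∘ₗ J₁ = J₂)
    (hs1 : ∀ A B : V, ⟪J₁ A, B⟫ = -⟪A, J₁ B⟫)
    (hs2 : ∀ A B : V, ⟪J₂ A, B⟫ = -⟪A, J₂ B⟫)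
    (hs3 : ∀ A B : V, ⟪J₃ A, B⟫ = -⟪A, J₃ B⟫)
    (hi1 : ∀ Z, ‖J₁ Z‖ = ‖Z‖) (hi2 : ∀ Z, ‖J₂ Z‖ = ‖Z‖) (hi3 : ∀ Z, ‖J₃ Z‖ = ‖Z‖)
    (hS : ∀ Z, S Z = ⟪Y, Z⟫ • X - ⟪X, Z⟫ • Y)
    (hS1 : ∀ Z, S₁ Z = ⟪J₁ Y, Z⟫ • J₁ X - ⟪J₁ X, Z⟫ • J₁ Y)
    (hS2 : ∀ Z, S₂ Z = ⟪J₂ Y, Z⟫ • J₂ X - ⟪J₂ X, Z⟫ • J₂ Y)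
    (hS3 : ∀ Z, S₃ Z = ⟪J₃ Y, Z⟫ • J₃ X - ⟪J₃ X, Z⟫ • J₃ Y) :
    (S + (S₁ + S₂ + S₃)) ^ 5 =
      (-(2 * ((‖X‖ ^ 2 * ‖Y‖ ^ 2 - ⟪X, Y⟫ ^ 2)
          + (⟪X, J₁ Y⟫ ^ 2 + ⟪X, J₂ Y⟫ ^ 2 + ⟪X, J₃ Y⟫ ^ 2)))) • (S + (S₁ + S₂ + S₃)) ^ 3
        - (((‖X‖ ^ 2 * ‖Y‖ ^ 2 - ⟪X, Y⟫ ^ 2)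
          - (⟪X, J₁ Y⟫ ^ 2 + ⟪X, J₂ Y⟫ ^ 2 + ⟪X, J₃ Y⟫ ^ 2)) ^ 2) • (S + (S₁ + S₂ + S₃)) := by
  have e12 : ∀ Z, J₁ (J₂ Z) = J₃ Z := fun Z => LinearMap.congr_fun h12 Z
  have e23 : ∀ Z, J₂ (J₃ Z) = J₁ Z := fun Z => LinearMap.congr_fun h23 Z
  have e31 : ∀ Z, J₃ (J₁ Z) = J₂ Z := fun Z => LinearMap.congr_fun h31 Z
  have e21 : ∀ Z, J₂ (J₁ Z) = - J₃ Z := fun Z => by rw [← e23, h2]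
  have e32 : ∀ Z, J₃ (J₂ Z) = - J₁ Z := fun Z => by rw [← e31, h3]
  have e13 : ∀ Z, J₁ (J₃ Z) = - J₂ Z := fun Z => by rw [← e12, h1]
  have hT : ∀ Z, (S + (S₁ + S₂ + S₃)) Z = (⟪Y, Z⟫ • X - ⟪X, Z⟫ • Y)
      + ((⟪J₁ Y, Z⟫ • J₁ X - ⟪J₁ X, Z⟫ • J₁ Y) + (⟪J₂ Y, Z⟫ • J₂ X - ⟪J₂ X, Z⟫ • J₂ Y)
      + (⟪J₃ Y, Z⟫ • J₃ X - ⟪J₃ X, Z⟫ • J₃ Y)) := fun Z => by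
    simp only [LinearMap.add_apply, hS, hS1, hS2, hS3]
  generalize S + (S₁ + S₂ + S₃) = T at hT ⊢
  have c1 : ∀ Z, T (J₁ Z) = J₁ (T Z) := fun Z => by
    simp only [hT, map_add, map_sub, map_smul, hs1, hs2, hs3, h1, e12, e13, e21, e31,
      inner_neg_right]
    module
  have c2 : ∀ Z, T (J₂ Z) = J₂ (T Z) := fun Z => by
    simp only [hT, map_add, map_sub, map_smul, hs1, hs2, hs3, h2, e12, e23, e21, e32,
      inner_neg_right]
    module
  have c3 : ∀ Z, T (J₃ Z) = J₃ (T Z) := fun Z => by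
    simp only [hT, map_add, map_sub, map_smul, hs1, hs2, hs3, h3, e13, e23, e31, e32,
      inner_neg_right]
    module
  have z1 : ∀ A, ⟪A, J₁ A⟫ = 0 := fun A => by
    have := hs1 A A; rw [real_inner_comm] at this; linarith
  have z2 : ∀ A, ⟪A, J₂ A⟫ = 0 := fun A => by
    have := hs2 A A; rw [real_inner_comm] at this; linarith
  have z3 : ∀ A, ⟪A, J₃ A⟫ = 0 := fun A => by
    have := hs3 A A; rw [real_inner_comm] at this; linarith
  have y1 : ⟪Y, J₁ X⟫ = -⟪X, J₁ Y⟫ := by rw [real_inner_comm, hs1]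
  have y2 : ⟪Y, J₂ X⟫ = -⟪X, J₂ Y⟫ := by rw [real_inner_comm, hs2]
  have y3 : ⟪Y, J₃ X⟫ = -⟪X, J₃ Y⟫ := by rw [real_inner_comm, hs3]
  have TX : T X = ⟪X, Y⟫ • X - (‖X‖ ^ 2) • Y
      + (⟪X, J₁ Y⟫ • J₁ X + ⟪X, J₂ Y⟫ • J₂ X + ⟪X, J₃ Y⟫ • J₃ X) := by
    simp only [hT, hs1, hs2, hs3, z1, z2, z3, y1, y2, y3, real_inner_self_eq_norm_sq,
      real_inner_comm X Y]
    module
  have TY : T Y = (‖Y‖ ^ 2) • X - ⟪X, Y⟫ • Y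
      + (⟪X, J₁ Y⟫ • J₁ Y + ⟪X, J₂ Y⟫ • J₂ Y + ⟪X, J₃ Y⟫ • J₃ Y) := by
    simp only [hT, hs1, hs2, hs3, z1, z2, z3, real_inner_self_eq_norm_sq]
    module
  generalize ⟪X, J₁ Y⟫ = m₁ at *
  generalize ⟪X, J₂ Y⟫ = m₂ at *
  generalize ⟪X, J₃ Y⟫ = m₃ at *
  generalize ⟪X, Y⟫ = a at *
  generalize ‖X‖ ^ 2 = p at *
  generalize ‖Y‖ ^ 2 = q at *
  obtain ⟨M, hM⟩ : ∃ M : V →ₗ[ℝ] V, M = m₁ • J₁ + m₂ • J₂ + m₃ • J₃ := ⟨_, rfl⟩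
  have hMa : ∀ Z, M Z = m₁ • J₁ Z + m₂ • J₂ Z + m₃ • J₃ Z := fun Z => by rw [hM]; rfl
  have hMM : ∀ Z, M (M Z) = (-(m₁ ^ 2 + m₂ ^ 2 + m₃ ^ 2)) • Z := fun Z => by
    simp only [hMa, map_add, map_smul, h1, h2, h3, e12, e13, e21, e23, e31, e32]
    module
  have cM : ∀ Z, T (M Z) = M (T Z) := fun Z => by
    simp only [hMa, map_add, map_smul, c1, c2, c3]
  rw [← hMa] at TX TY
  generalize hm : m₁ ^ 2 + m₂ ^ 2 + m₃ ^ 2 = m at *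
  have PX : T (T X) = (2 : ℝ) • M (T X) + (m - (p * q - a ^ 2)) • X := by
    simp only [TX, TY, map_add, map_sub, map_smul, cM, hMM]
    module
  have PY : T (T Y) = (2 : ℝ) • M (T Y) + (m - (p * q - a ^ 2)) • Y := by
    simp only [TX, TY, map_add, map_sub, map_smul, cM, hMM]
    module
  have key : ∀ A, T (T A) = (2 : ℝ) • M (T A) + (m - (p * q - a ^ 2)) • A →
      T (T (T (T A))) = (-(2 * ((p * q - a ^ 2) + m))) • T (T A)
        - (((p * q - a ^ 2) - m) ^ 2) • A := fun A h => by
    have h3 : T (T (T A)) = (2 : ℝ) • M (T (T A)) + (m - (p * q - a ^ 2)) • T A := by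
      conv_lhs => rw [h]
      simp only [map_add, map_smul, cM]
    have h4 : T (T (T (T A))) = (2 : ℝ) • M (T (T (T A))) + (m - (p * q - a ^ 2)) • T (T A) := by
      conv_lhs => rw [h3]
      simp only [map_add, map_smul, cM]
    have h5 : (2 : ℝ) • M (T A) = T (T A) - (m - (p * q - a ^ 2)) • A := by rw [h]; module
    have h6 : T (T (T (T A))) = (4 * (-m)) • T (T A)
        + (m - (p * q - a ^ 2)) • ((2 : ℝ) • M (T A)) + (m - (p * q - a ^ 2)) • T (T A) := by
      rw [h4, h3, map_add, map_smul, map_smul, hMM]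
      module
    rw [h6, h5]
    module
  have QX := key X PX
  have QY := key Y PY
  ext Z
  have hZ : (T ^ 5) Z = T (T (T (T (T Z)))) := rfl
  have hZ3 : (T ^ 3) Z = T (T (T Z)) := rfl
  rw [LinearMap.sub_apply, LinearMap.smul_apply, LinearMap.smul_apply, hZ, hZ3]
  rw [hT Z]
  simp only [map_add, map_sub, map_smul, c1, c2, c3]
  rw [QX, QY]
  simp only [map_add, map_sub, map_smul]
  module
end

section
/- For the curvature operator R of a quaternionic space form, there exist real coefficients (polynomials in 1/c, b, m₁, m₂, m₃) such that R⁵ = α·𝒥∘R⁴ + β·R³ + γ·𝒥∘R² + δ·R + ε·𝒥; moreover every power R^p with p ≥ 5 lies in the span of {R⁴, 𝒥∘R³, R², 𝒥∘R, E, 𝒥∘R⁴, R³, 𝒥∘R², R, 𝒥}. -/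
open scoped RealInnerProductSpace

theorem aux_alg {E : Type*} [Ring E] [Algebra ℝ E] (R j A : E) (k n e f : ℝ)
    (hR : R = k • A + (2 * k) • j) (hj : j * j = (-n) • (1 : E)) (hc : A * j = j * A)
    (h5 : A * (A * (A * (A * A))) = (-e) • (A * (A * A)) - f • A) :
    R ^ 5 = (10 * k) • (j * R ^ 4) + (40 * k ^ 2 * n - k ^ 2 * e) • R ^ 3
      + (-80 * k ^ 3 * n + 6 * k ^ 3 * e) • (j * R ^ 2)
      + (-(80 * k ^ 4 * n ^ 2 - 12 * k ^ 4 * e * n + k ^ 4 * f)) • R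
      + (32 * k ^ 5 * n ^ 2 - 8 * k ^ 5 * e * n + 2 * k ^ 5 * f) • j := by
  have hc' : ∀ Z, A * (j * Z) = j * (A * Z) := fun Z => by
    rw [← mul_assoc, hc, mul_assoc]
  have hj' : ∀ Z, j * (j * Z) = (-n) • Z := fun Z => by
    rw [← mul_assoc, hj, smul_mul_assoc, one_mul]
  have r2 : R ^ 2 = (k ^ 2) • (A * A) + (4 * k ^ 2) • (j * A) - (4 * k ^ 2 * n) • (1 : E) := by
    rw [pow_two, hR]
    simp only [mul_add, add_mul, smul_mul_assoc, mul_smul_comm, hj, hc]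
    module
  have r3 : R ^ 3 = (k ^ 3) • (A * (A * A)) + (6 * k ^ 3) • (j * (A * A))
      - (12 * k ^ 3 * n) • A - (8 * k ^ 3 * n) • j := by
    rw [pow_succ', r2, hR]
    simp only [mul_add, add_mul, mul_sub, sub_mul, smul_mul_assoc, mul_smul_comm, hj, hc, hc', hj',
      mul_one]
    module
  have r4 : R ^ 4 = (k ^ 4) • (A * (A * (A * A))) + (8 * k ^ 4) • (j * (A * (A * A)))
      - (24 * k ^ 4 * n) • (A * A) - (32 * k ^ 4 * n) • (j * A) + (16 * k ^ 4 * n ^ 2) • (1 : E) := by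
    rw [pow_succ', r3, hR]
    simp only [mul_add, add_mul, mul_sub, sub_mul, smul_mul_assoc, mul_smul_comm, hj, hc, hc', hj',
      mul_one]
    module
  rw [pow_succ' R 4, r4, r3, r2, hR]
  simp only [mul_add, add_mul, mul_sub, sub_mul, smul_mul_assoc, mul_smul_comm, hj, hc, hc', hj',
      mul_one, h5]
  module

theorem aux_span {E : Type*} [Ring E] [Algebra ℝ E] (R j : E) (n a b c d e : ℝ)
    (hj : j * j = (-n) • (1 : E))
    (h : R ^ 5 = a • (j * R ^ 4) + b • R ^ 3 + c • (j * R ^ 2) + d • R + e • j)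
    (S : Submodule ℝ E) (h0 : (1 : E) ∈ S) (h0' : j ∈ S) (h1 : R ∈ S) (h1' : j * R ∈ S)
    (h2 : R ^ 2 ∈ S) (h2' : j * R ^ 2 ∈ S) (h3 : R ^ 3 ∈ S) (h3' : j * R ^ 3 ∈ S)
    (h4 : R ^ 4 ∈ S) (h4' : j * R ^ 4 ∈ S) (p : ℕ) : R ^ p ∈ S ∧ j * R ^ p ∈ S := by
  induction p using Nat.strong_induction_on with
  | _ p ih =>
    match p, ih with
    | 0, _ => simpa using ⟨h0, h0'⟩
    | 1, _ => simpa using ⟨h1, h1'⟩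
    | 2, _ => exact ⟨h2, h2'⟩
    | 3, _ => exact ⟨h3, h3'⟩
    | 4, _ => exact ⟨h4, h4'⟩
    | p + 5, ih =>
      have hj' : ∀ Z, j * (j * Z) = (-n) • Z := fun Z => by
        rw [← mul_assoc, hj, smul_mul_assoc, one_mul]
      have e1 : R ^ (p + 5) = a • (j * R ^ (p + 4)) + b • R ^ (p + 3) + c • (j * R ^ (p + 2))
          + d • R ^ (p + 1) + e • (j * R ^ p) := by
        rw [add_comm p 5, pow_add, h, add_comm p 4, add_comm p 3, add_comm p 2, add_comm p 1]
        simp only [pow_add, add_mul, smul_mul_assoc, mul_assoc, pow_one]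
      obtain ⟨_, q4⟩ := ih (p + 4) (by omega)
      obtain ⟨q3, q3'⟩ := ih (p + 3) (by omega)
      obtain ⟨_, q2⟩ := ih (p + 2) (by omega)
      obtain ⟨q1, q1'⟩ := ih (p + 1) (by omega)
      obtain ⟨q0, q0'⟩ := ih p (by omega)
      have q2r := (ih (p + 2) (by omega)).1
      have q4r := (ih (p + 4) (by omega)).1
      rw [e1]
      constructor
      · exact S.add_mem (S.add_mem (S.add_mem (S.add_mem (S.smul_mem _ q4) (S.smul_mem _ q3))
          (S.smul_mem _ q2)) (S.smul_mem _ q1)) (S.smul_mem _ q0')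
      · simp only [mul_add, mul_smul_comm, hj']
        exact S.add_mem (S.add_mem (S.add_mem (S.add_mem (S.smul_mem _ (S.smul_mem _ q4r))
          (S.smul_mem _ q3')) (S.smul_mem _ (S.smul_mem _ q2r))) (S.smul_mem _ q1'))
          (S.smul_mem _ (S.smul_mem _ q0))

/-- for the curvature operator `R` of a quaternionic space form (`c ≠ 0`),
`R⁵ = α 𝒥∘R⁴ + β R³ + γ 𝒥∘R² + δ R + ε 𝒥` for some reals, and every power `R^p`, `p ≥ 5`,
lies in the span of `{R⁴, 𝒥∘R³, R², 𝒥∘R, E, 𝒥∘R⁴, R³, 𝒥∘R², R, 𝒥}`. -/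
theorem stmt_16 {V : Type*} [NormedAddCommGroup V] [InnerProductSpace ℝ V]
    (c : ℝ) (hc : c ≠ 0) (X Y : V) (J₁ J₂ J₃ R : V →ₗ[ℝ] V)
    (h1 : ∀ Z, J₁ (J₁ Z) = -Z) (h2 : ∀ Z, J₂ (J₂ Z) = -Z) (h3 : ∀ Z, J₃ (J₃ Z) = -Z)
    (h12 : J₁ ∘ₗ J₂ = J₃) (h23 : J₂ ∘ₗ J₃ = J₁) (h31 : J₃ ∘ₗ J₁ = J₂)
    (hs1 : ∀ A B : V, ⟪J₁ A, B⟫ = -⟪A, J₁ B⟫)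
    (hs2 : ∀ A B : V, ⟪J₂ A, B⟫ = -⟪A, J₂ B⟫)
    (hs3 : ∀ A B : V, ⟪J₃ A, B⟫ = -⟪A, J₃ B⟫)
    (hi1 : ∀ Z, ‖J₁ Z‖ = ‖Z‖) (hi2 : ∀ Z, ‖J₂ Z‖ = ‖Z‖) (hi3 : ∀ Z, ‖J₃ Z‖ = ‖Z‖)
    (hR : ∀ Z, R Z = (c / 4) • (⟪Y, Z⟫ • X - ⟪X, Z⟫ • Y
      + (⟪J₁ Y, Z⟫ • J₁ X - ⟪J₁ X, Z⟫ • J₁ Y)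
      + (⟪J₂ Y, Z⟫ • J₂ X - ⟪J₂ X, Z⟫ • J₂ Y)
      + (⟪J₃ Y, Z⟫ • J₃ X - ⟪J₃ X, Z⟫ • J₃ Y)
      + (2 * ⟪X, J₁ Y⟫) • J₁ Z + (2 * ⟪X, J₂ Y⟫) • J₂ Z + (2 * ⟪X, J₃ Y⟫) • J₃ Z)) :
    (∃ α β γ δ ε : ℝ,
      R ^ 5 = α • ((⟪X, J₁ Y⟫ • J₁ + ⟪X, J₂ Y⟫ • J₂ + ⟪X, J₃ Y⟫ • J₃) ∘ₗ R ^ 4)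
        + β • R ^ 3
        + γ • ((⟪X, J₁ Y⟫ • J₁ + ⟪X, J₂ Y⟫ • J₂ + ⟪X, J₃ Y⟫ • J₃) ∘ₗ R ^ 2)
        + δ • R
        + ε • (⟪X, J₁ Y⟫ • J₁ + ⟪X, J₂ Y⟫ • J₂ + ⟪X, J₃ Y⟫ • J₃)) ∧
    ∀ p : ℕ, 5 ≤ p →
      R ^ p ∈ Submodule.span ℝ
        ({R ^ 4, (⟪X, J₁ Y⟫ • J₁ + ⟪X, J₂ Y⟫ • J₂ + ⟪X, J₃ Y⟫ • J₃) ∘ₗ R ^ 3,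
          R ^ 2, (⟪X, J₁ Y⟫ • J₁ + ⟪X, J₂ Y⟫ • J₂ + ⟪X, J₃ Y⟫ • J₃) ∘ₗ R,
          LinearMap.id,
          (⟪X, J₁ Y⟫ • J₁ + ⟪X, J₂ Y⟫ • J₂ + ⟪X, J₃ Y⟫ • J₃) ∘ₗ R ^ 4,
          R ^ 3, (⟪X, J₁ Y⟫ • J₁ + ⟪X, J₂ Y⟫ • J₂ + ⟪X, J₃ Y⟫ • J₃) ∘ₗ R ^ 2,
          R, ⟪X, J₁ Y⟫ • J₁ + ⟪X, J₂ Y⟫ • J₂ + ⟪X, J₃ Y⟫ • J₃} : Set (V →ₗ[ℝ] V)) := by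
  have e12 : ∀ Z, J₁ (J₂ Z) = J₃ Z := fun Z => by rw [← h12]; rfl
  have e23 : ∀ Z, J₂ (J₃ Z) = J₁ Z := fun Z => by rw [← h23]; rfl
  have e31 : ∀ Z, J₃ (J₁ Z) = J₂ Z := fun Z => by rw [← h31]; rfl
  have e21 : ∀ Z, J₂ (J₁ Z) = - J₃ Z := fun Z => by rw [← e23, h2]
  have e32 : ∀ Z, J₃ (J₂ Z) = - J₁ Z := fun Z => by rw [← e31, h3]
  have e13 : ∀ Z, J₁ (J₃ Z) = - J₂ Z := fun Z => by rw [← e12, h1]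
  have z1 : ∀ Z, ⟪Z, J₁ Z⟫ = 0 := fun Z => by
    have := hs1 Z Z; rw [real_inner_comm] at this; linarith
  have z2 : ∀ Z, ⟪Z, J₂ Z⟫ = 0 := fun Z => by
    have := hs2 Z Z; rw [real_inner_comm] at this; linarith
  have z3 : ∀ Z, ⟪Z, J₃ Z⟫ = 0 := fun Z => by
    have := hs3 Z Z; rw [real_inner_comm] at this; linarith
  have t1 : ⟪Y, J₁ X⟫ = -⟪X, J₁ Y⟫ := by rw [← hs1, real_inner_comm]
  have t2 : ⟪Y, J₂ X⟫ = -⟪X, J₂ Y⟫ := by rw [← hs2, real_inner_comm]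
  have t3 : ⟪Y, J₃ X⟫ = -⟪X, J₃ Y⟫ := by rw [← hs3, real_inner_comm]
  have t0 : ⟪Y, X⟫ = ⟪X, Y⟫ := real_inner_comm _ _
  generalize hm1 : ⟪X, J₁ Y⟫ = m₁ at *
  generalize hm2 : ⟪X, J₂ Y⟫ = m₂ at *
  generalize hm3 : ⟪X, J₃ Y⟫ = m₃ at *
  set j : Module.End ℝ V := m₁ • J₁ + m₂ • J₂ + m₃ • J₃ with hjdef
  have hjZ : ∀ Z, j Z = m₁ • J₁ Z + m₂ • J₂ Z + m₃ • J₃ Z := fun Z => by simp [hjdef]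
  have hjj : ∀ Z, j (j Z) = (-(m₁ ^ 2 + m₂ ^ 2 + m₃ ^ 2)) • Z := fun Z => by
    simp only [hjZ, map_add, map_smul, h1, h2, h3, e12, e23, e31, e21, e32, e13]
    module
  set A : Module.End ℝ V := (4 / c) • R - (2 : ℝ) • j with hAdef
  have hRA : R = (c / 4) • A + (2 * (c / 4)) • j := by
    rw [hAdef, smul_sub, smul_smul, smul_smul]
    have : c / 4 * (4 / c) = 1 := by field_simp
    rw [this]; module
  have hA : ∀ Z, A Z = ⟪Y, Z⟫ • X - ⟪X, Z⟫ • Y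
      + (⟪J₁ Y, Z⟫ • J₁ X - ⟪J₁ X, Z⟫ • J₁ Y)
      + (⟪J₂ Y, Z⟫ • J₂ X - ⟪J₂ X, Z⟫ • J₂ Y)
      + (⟪J₃ Y, Z⟫ • J₃ X - ⟪J₃ X, Z⟫ • J₃ Y) := fun Z => by
    have : A Z = (4 / c) • R Z - (2 : ℝ) • j Z := by simp [hAdef]
    rw [this, hR, smul_smul, hjZ]
    have : 4 / c * (c / 4) = 1 := by field_simp
    rw [this]; module
  have a1 : ∀ Z, A (J₁ Z) = J₁ (A Z) := fun Z => by
    simp only [hA, map_add, map_sub, map_smul, hs1, hs2, hs3, h1, h2, h3, e12, e23, e31, e21, e32,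
      e13, inner_neg_right]
    module
  have a2 : ∀ Z, A (J₂ Z) = J₂ (A Z) := fun Z => by
    simp only [hA, map_add, map_sub, map_smul, hs1, hs2, hs3, h1, h2, h3, e12, e23, e31, e21, e32,
      e13, inner_neg_right]
    module
  have a3 : ∀ Z, A (J₃ Z) = J₃ (A Z) := fun Z => by
    simp only [hA, map_add, map_sub, map_smul, hs1, hs2, hs3, h1, h2, h3, e12, e23, e31, e21, e32,
      e13, inner_neg_right]
    module
  have aj : ∀ Z, A (j Z) = j (A Z) := fun Z => by
    simp only [hjZ, map_add, map_smul, a1, a2, a3]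
  have AX : A X = ⟪X, Y⟫ • X + j X - ⟪X, X⟫ • Y := by
    simp only [hA, hjZ, hs1, hs2, hs3, t1, t2, t3, t0, z1, z2, z3]
    module
  have AY : A Y = ⟪Y, Y⟫ • X - ⟪X, Y⟫ • Y + j Y := by
    simp only [hA, hjZ, hs1, hs2, hs3, hm1, hm2, hm3, z1, z2, z3]
    module
  generalize ⟪X, Y⟫ = s at AX AY
  generalize ⟪X, X⟫ = x at AX
  generalize ⟪Y, Y⟫ = y at AY
  set n : ℝ := m₁ ^ 2 + m₂ ^ 2 + m₃ ^ 2 with hn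
  set d : ℝ := x * y - s ^ 2 - n with hd
  have QX : A (A X) = (2 : ℝ) • j (A X) - d • X := by
    rw [AX]
    simp only [map_add, map_sub, map_smul, aj, AX, AY, hjj, hd]
    module
  have QY : A (A Y) = (2 : ℝ) • j (A Y) - d • Y := by
    rw [AY]
    simp only [map_add, map_sub, map_smul, aj, AX, AY, hjj, hd]
    module
  have key : ∀ W, A (A W) = (2 : ℝ) • j (A W) - d • W →
      A (A (A (A W))) = (-(4 * n + 2 * d)) • A (A W) - (d ^ 2) • W := fun W hW => by
    have h3' : A (A (A W)) = (2 : ℝ) • j (A (A W)) - d • A W := by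
      conv_lhs => rw [hW]
      simp only [map_sub, map_smul, aj]
    rw [h3']
    simp only [map_sub, map_smul, aj]
    rw [h3', hW]
    simp only [map_sub, map_smul, hjj]
    module
  have KX := key X QX
  have KY := key Y QY
  have h5 : A * (A * (A * (A * A))) = (-(4 * n + 2 * d)) • (A * (A * A)) - (d ^ 2) • A := by
    ext Z
    simp only [Module.End.mul_apply, LinearMap.sub_apply, LinearMap.smul_apply]
    rw [hA Z]
    simp only [map_add, map_sub, map_smul, a1, a2, a3, KX, KY]
    module
  have hjj' : j * j = (-n) • (1 : Module.End ℝ V) := by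
    ext Z; simpa using hjj Z
  have main := aux_alg (E := Module.End ℝ V) R j A (c / 4) n _ _ hRA hjj'
    (by ext Z; exact aj Z) h5
  refine ⟨⟨_, _, _, _, _, main⟩, fun p _ => ?_⟩
  refine (aux_span (E := Module.End ℝ V) R j n _ _ _ _ _ hjj' main _
    ?_ ?_ ?_ ?_ ?_ ?_ ?_ ?_ ?_ ?_ p).1
  · exact Submodule.subset_span (Or.inr (Or.inr (Or.inr (Or.inr (Or.inl rfl)))))
  all_goals
    apply Submodule.subset_span
    simp only [Set.mem_insert_iff, Set.mem_singleton_iff, Module.End.mul_eq_comp, true_or, or_true]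
end
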